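/- Let N ≥ 2 be an integer, ω > 0, and 1 < p < p_max, let k ≥ 1 be an integer, and let U : [0,∞) → (0,∞) be the radial profile of a ground-state profile u of (QLS). Suppose v : [0,∞) → ℝ is continuous, twice continuously differentiable on (0,∞), satisfies ∫₀^∞ (v(r)² + v'(r)²) r^{N−1} dr < ∞, and solves L₋,ₖ v = 0 on (0,∞) with angular eigenvalue λ_k = k(N+k−2) > 0. Then v is identically zero. -/

import Mathlib

open MeasureTheory Real Filter Topology

noncomputable section

/-- Partial derivative along the `i`-th coordinate direction. -/
def pd {N : ℕ} {F : Type*} [NormedAddCommGroup F] [NormedSpace ℝ F]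
    (i : Fin N) (f : EuclideanSpace ℝ (Fin N) → F) (x : EuclideanSpace ℝ (Fin N)) : F :=
  fderiv ℝ f x (EuclideanSpace.single i 1)

/-- Euclidean Laplacian. -/
def lap {N : ℕ} {F : Type*} [NormedAddCommGroup F] [NormedSpace ℝ F]
    (f : EuclideanSpace ℝ (Fin N) → F) (x : EuclideanSpace ℝ (Fin N)) : F :=
  ∑ i : Fin N, pd i (pd i f) x

/-- Squared norm of the gradient of a real-valued function: `|∇f|²`. -/
def gradsq {N : ℕ} (f : EuclideanSpace ℝ (Fin N) → ℝ) (x : EuclideanSpace ℝ (Fin N)) : ℝ :=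
  ∑ i : Fin N, (pd i f x) ^ 2

/-- A ground-state profile of the quasilinear Schrödinger equation (QLS)
`-Δu - uΔ(u²) + ωu - u^p = 0` on `ℝ^N`: smooth, positive, radially symmetric with a
strictly decreasing positive profile, solves (QLS) pointwise, and decays
exponentially together with all its derivatives. -/
structure IsGroundState (N : ℕ) (ω p : ℝ) (u : EuclideanSpace ℝ (Fin N) → ℝ) : Prop where
  smooth : ContDiff ℝ (⊤ : ℕ∞) u
  pos : ∀ x, 0 < u x
  radial : ∃ U : ℝ → ℝ, StrictAntiOn U (Set.Ici 0) ∧ (∀ r, 0 ≤ r → 0 < U r) ∧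
      ∀ x, u x = U ‖x‖
  solves : ∀ x, -lap u x - u x * lap (fun y => (u y) ^ 2) x + ω * u x - (u x) ^ p = 0
  decay : ∀ k : ℕ, ∃ C > 0, ∃ δ > 0, ∀ x,
      ‖iteratedFDeriv ℝ k u x‖ ≤ C * Real.exp (-δ * ‖x‖)

/-- The linearized operator `L₊` around `u` (real-valued functions). -/
def Lplus {N : ℕ} (ω p : ℝ) (u η : EuclideanSpace ℝ (Fin N) → ℝ)
    (x : EuclideanSpace ℝ (Fin N)) : ℝ :=
  -lap η x - 2 * u x * lap (fun y => u y * η y) x + ω * η x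
    - (lap (fun y => (u y) ^ 2) x + p * u x ^ (p - 1)) * η x

/-- The linearized operator `L₋` around `u`. -/
def Lminus {N : ℕ} (ω p : ℝ) (u ζ : EuclideanSpace ℝ (Fin N) → ℝ)
    (x : EuclideanSpace ℝ (Fin N)) : ℝ :=
  -lap ζ x + ω * ζ x - (lap (fun y => (u y) ^ 2) x + u x ^ (p - 1)) * ζ x

/-- Radial Laplacian `Δ_r f (r) = f''(r) + ((N-1)/r) f'(r)`. -/
def lapRad (N : ℕ) (f : ℝ → ℝ) (r : ℝ) : ℝ :=
  deriv (deriv f) r + ((N : ℝ) - 1) / r * deriv f r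

/-- The radial linearized operator `L₊,ₖ` with angular eigenvalue `λ_k = k(N+k-2)`. -/
def LplusRad (N : ℕ) (ω p : ℝ) (U : ℝ → ℝ) (k : ℕ) (v : ℝ → ℝ) (r : ℝ) : ℝ :=
  -(1 + 2 * U r ^ 2) *
      (deriv (deriv v) r + ((N : ℝ) - 1) / r * deriv v r
        - (k : ℝ) * ((N : ℝ) + (k : ℝ) - 2) / r ^ 2 * v r)
    - 4 * U r * deriv U r * deriv v r + ω * v r
    - (2 * U r * lapRad N U r + lapRad N (fun s => U s ^ 2) r + p * U r ^ (p - 1)) * v r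

/-- The radial linearized operator `L₋,ₖ` with angular eigenvalue `λ_k = k(N+k-2)`. -/
def LminusRad (N : ℕ) (ω p : ℝ) (U : ℝ → ℝ) (k : ℕ) (v : ℝ → ℝ) (r : ℝ) : ℝ :=
  -deriv (deriv v) r - ((N : ℝ) - 1) / r * deriv v r
    + (k : ℝ) * ((N : ℝ) + (k : ℝ) - 2) / r ^ 2 * v r + ω * v r
    - (lapRad N (fun s => U s ^ 2) r + U r ^ (p - 1)) * v r

/-!
The profile `U` itself solves the radial equation for angular momentum `0`: `Δ_r U = V U` with
`V = ω - Δ_r(U²) - U^(p-1)`, while `Δ_r v = (V + λ_k / r²) v`. Since `U > 0`, Picone's identity says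
that the flux `Q = r^(N-1) (v v' - v² U'/U)` has derivative
`D = r^(N-1) ((v' - v U'/U)² + λ_k v² / r²) ≥ 0`. Writing `g = r^(N-1) v²`, one has `Q² ≤ g Q'`, a
Riccati inequality: where `Q ≠ 0`, the function `-1/Q` grows at least as fast as `∫ 1/g`. But `1/g`
has infinite integral both at infinity (where `g` is integrable) and at the origin (where
`g = O(r)`), which excludes `Q > 0` and `Q < 0` respectively. Hence `Q = 0`, so `D = 0` and `v = 0`.
-/

open Set Asymptotics

/-! ### Riccati inequalities -/

section Riccati

variable {Q Q' W w : ℝ → ℝ} {a b : ℝ}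

lemma monotoneOn_of_hasDerivAt_nonneg {s : Set ℝ} (hs : Convex ℝ s)
    (hQ : ∀ r ∈ s, HasDerivAt Q (Q' r) r) (hQ'_nonneg : ∀ r ∈ s, 0 ≤ Q' r) : MonotoneOn Q s :=
  monotoneOn_of_hasDerivWithinAt_nonneg hs
    (fun r hr => (hQ r hr).continuousAt.continuousWithinAt)
    (fun r hr => (hQ r (interior_subset hr)).hasDerivWithinAt)
    fun r hr => hQ'_nonneg r (interior_subset hr)

lemma monotoneOn_neg_inv_sub_of_riccati {s : Set ℝ} (hs : Convex ℝ s)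
    (hQ : ∀ r ∈ s, HasDerivAt Q (Q' r) r) (hW : ∀ r ∈ s, HasDerivAt W (w r) r)
    (hne : ∀ r ∈ s, Q r ≠ 0) (hric : ∀ r ∈ s, w r * Q r ^ 2 ≤ Q' r) :
    MonotoneOn (fun r => -(Q r)⁻¹ - W r) s := by
  have hderiv : ∀ r ∈ s, HasDerivAt (fun r => -(Q r)⁻¹ - W r) (-(-Q' r / Q r ^ 2) - w r) r :=
    fun r hr => ((hQ r hr).inv (hne r hr)).neg.sub (hW r hr)
  refine monotoneOn_of_hasDerivAt_nonneg hs hderiv fun r hr => ?_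
  have hsq : 0 < Q r ^ 2 := sq_pos_of_ne_zero (hne r hr)
  have hle : w r ≤ Q' r / Q r ^ 2 := (le_div_iff₀ hsq).2 (hric r hr)
  rw [neg_div, neg_neg]
  exact sub_nonneg.2 hle

lemma nonpos_of_riccati_of_tendsto_atTop (hmono : MonotoneOn Q (Ioi a))
    (hQ : ∀ r ∈ Ioi a, HasDerivAt Q (Q' r) r) (hW : ∀ r ∈ Ioi a, HasDerivAt W (w r) r)
    (hric : ∀ r ∈ Ioi a, w r * Q r ^ 2 ≤ Q' r) (hlim : Tendsto W atTop atTop) :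
    ∀ r ∈ Ioi a, Q r ≤ 0 := by
  intro r₀ hr₀
  by_contra! hpos
  have hsub : Ici r₀ ⊆ Ioi a := Ici_subset_Ioi.2 hr₀
  have hQpos : ∀ r ∈ Ici r₀, 0 < Q r := fun r hr => hpos.trans_le (hmono hr₀ (hsub hr) hr)
  have hm : MonotoneOn (fun r => -(Q r)⁻¹ - W r) (Ici r₀) :=
    monotoneOn_neg_inv_sub_of_riccati (convex_Ici r₀) (fun r hr => hQ r (hsub hr))
      (fun r hr => hW r (hsub hr)) (fun r hr => (hQpos r hr).ne') fun r hr => hric r (hsub hr)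
  obtain ⟨r, hWr, hr⟩ :=
    ((hlim.eventually_gt_atTop (W r₀ + (Q r₀)⁻¹)).and (eventually_ge_atTop r₀)).exists
  have hle : -(Q r₀)⁻¹ - W r₀ ≤ -(Q r)⁻¹ - W r := hm self_mem_Ici hr hr
  linarith [inv_pos.2 (hQpos r hr)]

lemma nonneg_of_riccati_of_tendsto_nhdsGT (hmono : MonotoneOn Q (Ioo a b))
    (hQ : ∀ r ∈ Ioo a b, HasDerivAt Q (Q' r) r) (hW : ∀ r ∈ Ioo a b, HasDerivAt W (w r) r)
    (hric : ∀ r ∈ Ioo a b, w r * Q r ^ 2 ≤ Q' r) (hlim : Tendsto W (𝓝[>] a) atBot) :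
    ∀ r ∈ Ioo a b, 0 ≤ Q r := by
  intro r₀ hr₀
  by_contra! hneg
  have hsub : Ioc a r₀ ⊆ Ioo a b := fun r hr => ⟨hr.1, hr.2.trans_lt hr₀.2⟩
  have hQneg : ∀ r ∈ Ioc a r₀, Q r < 0 := fun r hr => (hmono (hsub hr) hr₀ hr.2).trans_lt hneg
  have hm : MonotoneOn (fun r => -(Q r)⁻¹ - W r) (Ioc a r₀) :=
    monotoneOn_neg_inv_sub_of_riccati (convex_Ioc a r₀) (fun r hr => hQ r (hsub hr))
      (fun r hr => hW r (hsub hr)) (fun r hr => (hQneg r hr).ne) fun r hr => hric r (hsub hr)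
  obtain ⟨r, hWr, hr⟩ :=
    ((hlim.eventually_lt_atBot (W r₀ + (Q r₀)⁻¹)).and (Ioc_mem_nhdsGT hr₀.1)).exists
  have hle : -(Q r)⁻¹ - W r ≤ -(Q r₀)⁻¹ - W r₀ := hm hr ⟨hr₀.1, le_rfl⟩ hr.2
  linarith [inv_lt_zero.2 (hQneg r hr)]

end Riccati

section WeightedRiccati

variable {Q Q' g : ℝ → ℝ}

lemma nonpos_of_sq_le_mul_deriv_of_integrableOn (hQ : ∀ r ∈ Ioi 0, HasDerivAt Q (Q' r) r)
    (hQ'_nonneg : ∀ r ∈ Ioi 0, 0 ≤ Q' r)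
    (hQg : ∀ r ∈ Ioi 0, Q r ^ 2 ≤ g r * Q' r)
    (hgc : ContinuousOn g (Ioi 0)) (hgi : IntegrableOn g (Ioi 0)) :
    ∀ r ∈ Ioi 0, Q r ≤ 0 := by
  have hderiv : ∀ r ∈ Ioi (0 : ℝ), HasDerivAt (fun s => 2 * s - ∫ t in 1..s, g t) (2 - g r) r := by
    intro r hr
    have hint : IntervalIntegrable g volume 1 r :=
      (hgc.mono (ordConnected_Ioi.uIcc_subset (mem_Ioi.2 one_pos) hr)).intervalIntegrable
    have hG : HasDerivAt (fun s => ∫ t in 1..s, g t) (g r) r :=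
      intervalIntegral.integral_hasDerivAt_right hint
        (hgc.stronglyMeasurableAtFilter isOpen_Ioi r hr) (hgc.continuousAt (Ioi_mem_nhds hr))
    exact (hasDerivAt_const_mul (2 : ℝ)).sub hG
  have hlim : Tendsto (fun s => 2 * s - ∫ t in 1..s, g t) atTop atTop := by
    have hG : Tendsto (fun s => ∫ t in 1..s, g t) atTop (𝓝 (∫ t in Ioi 1, g t)) :=
      intervalIntegral_tendsto_integral_Ioi 1 (hgi.mono_set (Ioi_subset_Ioi zero_le_one)) tendsto_id
    exact (tendsto_id.const_mul_atTop two_pos).atTop_add hG.neg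
  refine nonpos_of_riccati_of_tendsto_atTop
    (monotoneOn_of_hasDerivAt_nonneg (convex_Ioi 0) hQ hQ'_nonneg) hQ hderiv (fun r hr => ?_) hlim
  -- `1 / g ≥ 2 - g`, in the division-free form `(2 - g) g ≤ 1`.
  rcases le_total (g r) 2 with hg | hg
  · calc (2 - g r) * Q r ^ 2 ≤ (2 - g r) * (g r * Q' r) :=
          mul_le_mul_of_nonneg_left (hQg r hr) (sub_nonneg.2 hg)
      _ = Q' r - (g r - 1) ^ 2 * Q' r := by ring
      _ ≤ Q' r := sub_le_self _ (mul_nonneg (sq_nonneg _) (hQ'_nonneg r hr))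
  · exact (mul_nonpos_of_nonpos_of_nonneg (sub_nonpos.2 hg) (sq_nonneg _)).trans (hQ'_nonneg r hr)

lemma nonneg_of_sq_le_mul_deriv_of_isBigO (hQ : ∀ r ∈ Ioi 0, HasDerivAt Q (Q' r) r)
    (hQ'_nonneg : ∀ r ∈ Ioi 0, 0 ≤ Q' r)
    (hQg : ∀ r ∈ Ioi 0, Q r ^ 2 ≤ g r * Q' r) (hg : g =O[𝓝[>] 0] fun r => r) :
    ∀ r ∈ Ioi 0, 0 ≤ Q r := by
  have hmono : MonotoneOn Q (Ioi 0) :=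
    monotoneOn_of_hasDerivAt_nonneg (convex_Ioi 0) hQ hQ'_nonneg
  obtain ⟨M, hM, hgM⟩ := hg.exists_pos
  obtain ⟨ε, hε, hgε⟩ := mem_nhdsGT_iff_exists_Ioo_subset.1 hgM.bound
  have hε : 0 < ε := hε
  have hderiv : ∀ r ∈ Ioo 0 ε, HasDerivAt (fun s => M⁻¹ * log s) (M⁻¹ * r⁻¹) r :=
    fun r hr => (hasDerivAt_log hr.1.ne').const_mul M⁻¹
  have hlim : Tendsto (fun s => M⁻¹ * log s) (𝓝[>] 0) atBot :=
    tendsto_log_nhdsGT_zero.const_mul_atBot (inv_pos.2 hM)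
  have hric : ∀ r ∈ Ioo 0 ε, M⁻¹ * r⁻¹ * Q r ^ 2 ≤ Q' r := by
    intro r hr
    have hr0 : 0 < r := hr.1
    have hgr : g r ≤ M * r := by
      simpa [abs_of_pos hr0] using (le_abs_self (g r)).trans (hgε hr)
    rw [← mul_inv, inv_mul_le_iff₀ (mul_pos hM hr0)]
    exact (hQg r hr0).trans (mul_le_mul_of_nonneg_right hgr (hQ'_nonneg r hr0))
  have hnear : ∀ r ∈ Ioo 0 ε, 0 ≤ Q r :=
    nonneg_of_riccati_of_tendsto_nhdsGT (hmono.mono Ioo_subset_Ioi_self)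
      (fun r hr => hQ r hr.1) hderiv hric hlim
  intro r hr
  have hmin : 0 < min r (ε / 2) := lt_min hr (half_pos hε)
  exact (hnear _ ⟨hmin, (min_le_right _ _).trans_lt (half_lt_self hε)⟩).trans
    (hmono hmin hr (min_le_left _ _))

lemma eq_zero_of_sq_le_mul_deriv (hQ : ∀ r ∈ Ioi 0, HasDerivAt Q (Q' r) r)
    (hQ'_nonneg : ∀ r ∈ Ioi 0, 0 ≤ Q' r) (hQg : ∀ r ∈ Ioi 0, Q r ^ 2 ≤ g r * Q' r)
    (hgc : ContinuousOn g (Ioi 0)) (hgi : IntegrableOn g (Ioi 0))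
    (hg : g =O[𝓝[>] 0] fun r => r) :
    ∀ r ∈ Ioi 0, Q r = 0 := by
  exact fun r hr => le_antisymm
    (nonpos_of_sq_le_mul_deriv_of_integrableOn hQ hQ'_nonneg hQg hgc hgi r hr)
    (nonneg_of_sq_le_mul_deriv_of_isBigO hQ hQ'_nonneg hQg hg r hr)

end WeightedRiccati

lemma differentiableAt_deriv_of_contDiffAt_two {f : ℝ → ℝ} {r : ℝ} (hf : ContDiffAt ℝ 2 f r) :
    DifferentiableAt ℝ (deriv f) r :=
  (hf.derivWithin (m := 1) (by norm_num)).differentiableAt one_ne_zero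

/-! ### Picone's identity for the radial Laplacian -/

section Picone

variable {N : ℕ} {f v V c : ℝ → ℝ} {r : ℝ}

/-- The radial Picone flux `r^(N-1) (v v' - v² f'/f)` of `v` relative to a positive reference
function `f`. The exponent is a truncated subtraction, so this is the flux only for `1 ≤ N`. -/
def piconeFlux (N : ℕ) (f v : ℝ → ℝ) (r : ℝ) : ℝ :=
  r ^ (N - 1) * (v r * deriv v r - v r ^ 2 * (deriv f r / f r))

/-- The derivative of `piconeFlux N f v` when `Δ_r f = V f` and `Δ_r v = (V + c) v`, see
`hasDerivAt_piconeFlux`; the function `c` is the excess of the potential of `v` over that of `f`. -/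
def piconeDensity (N : ℕ) (f v c : ℝ → ℝ) (r : ℝ) : ℝ :=
  r ^ (N - 1) * ((deriv v r - v r * (deriv f r / f r)) ^ 2 + c r * v r ^ 2)

lemma hasDerivAt_pow_pred_dim (hN : 1 ≤ N) (hr : r ≠ 0) :
    HasDerivAt (fun s : ℝ => s ^ (N - 1)) (((N : ℝ) - 1) / r * r ^ (N - 1)) r := by
  obtain ⟨n, rfl⟩ := Nat.exists_eq_add_of_le' hN
  refine (hasDerivAt_pow n r).congr_deriv ?_
  rcases n with _ | m
  · simp
  · simp only [Nat.add_sub_cancel, pow_succ]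
    push_cast
    field_simp
    ring

lemma hasDerivAt_piconeFlux (hN : 1 ≤ N) (hr : r ≠ 0) (hf : ContDiffAt ℝ 2 f r) (hfr : f r ≠ 0)
    (hv : ContDiffAt ℝ 2 v r) (hf_eq : lapRad N f r = V r * f r)
    (hv_eq : lapRad N v r = (V r + c r) * v r) :
    HasDerivAt (piconeFlux N f v) (piconeDensity N f v c r) r := by
  have df := (hf.differentiableAt two_ne_zero).hasDerivAt
  have dv := (hv.differentiableAt two_ne_zero).hasDerivAt
  have ddf := (differentiableAt_deriv_of_contDiffAt_two hf).hasDerivAt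
  have ddv := (differentiableAt_deriv_of_contDiffAt_two hv).hasDerivAt
  have hf'' : deriv (deriv f) r = V r * f r - ((N : ℝ) - 1) / r * deriv f r :=
    eq_sub_of_add_eq hf_eq
  have hv'' : deriv (deriv v) r = (V r + c r) * v r - ((N : ℝ) - 1) / r * deriv v r :=
    eq_sub_of_add_eq hv_eq
  refine ((hasDerivAt_pow_pred_dim hN hr).mul
    ((dv.mul ddv).sub ((dv.pow 2).mul (ddf.div df hfr)))).congr_deriv ?_
  simp only [piconeDensity, Pi.mul_apply, Pi.sub_apply, Pi.pow_apply, Pi.div_apply, hf'', hv'']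
  field_simp
  ring

lemma piconeDensity_nonneg (hr : 0 ≤ r) (hc : 0 ≤ c r) : 0 ≤ piconeDensity N f v c r := by
  unfold piconeDensity
  positivity

lemma eq_zero_of_piconeDensity_eq_zero (hr : 0 < r) (hc : 0 < c r)
    (h : piconeDensity N f v c r = 0) : v r = 0 := by
  by_contra hv
  have : 0 < piconeDensity N f v c r := by
    unfold piconeDensity
    positivity
  exact this.ne' h

lemma sq_piconeFlux_le (hc : 0 ≤ c r) :
    piconeFlux N f v r ^ 2 ≤ v r ^ 2 * r ^ (N - 1) * piconeDensity N f v c r := by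
  have hrem : 0 ≤ c r * (v r ^ 2 * r ^ (N - 1)) ^ 2 := by positivity
  calc piconeFlux N f v r ^ 2
      ≤ piconeFlux N f v r ^ 2 + c r * (v r ^ 2 * r ^ (N - 1)) ^ 2 := le_add_of_nonneg_right hrem
    _ = v r ^ 2 * r ^ (N - 1) * piconeDensity N f v c r := by
        unfold piconeFlux piconeDensity
        ring

lemma sq_mul_pow_isBigO_id {n : ℕ} (hn : n ≠ 0) (hv : v =O[𝓝[>] 0] fun _ => (1 : ℝ)) :
    (fun r => v r ^ 2 * r ^ n) =O[𝓝[>] 0] fun r => r := by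
  obtain ⟨m, rfl⟩ := Nat.exists_eq_succ_of_ne_zero hn
  have hpow : (fun r : ℝ => r ^ m) =O[𝓝[>] 0] fun _ => (1 : ℝ) :=
    (((continuous_pow m).tendsto 0).mono_left nhdsWithin_le_nhds).isBigO_one ℝ
  simpa [pow_succ, mul_assoc] using (hv.pow 2).mul (hpow.mul (isBigO_refl (fun r : ℝ => r) _))

lemma eq_zero_of_lapRad_eq (hN : 2 ≤ N)
    (hf : ContDiffOn ℝ 2 f (Ioi 0)) (hf_pos : ∀ r ∈ Ioi 0, 0 < f r)
    (hf_eq : ∀ r ∈ Ioi 0, lapRad N f r = V r * f r) (hc : ∀ r ∈ Ioi 0, 0 < c r)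
    (hv : ContDiffOn ℝ 2 v (Ioi 0)) (hv_eq : ∀ r ∈ Ioi 0, lapRad N v r = (V r + c r) * v r)
    (hv_zero : v =O[𝓝[>] 0] fun _ => (1 : ℝ))
    (hv_int : IntegrableOn (fun r => v r ^ 2 * r ^ (N - 1)) (Ioi 0)) :
    ∀ r ∈ Ioi 0, v r = 0 := by
  have hderiv : ∀ r ∈ Ioi 0, HasDerivAt (piconeFlux N f v) (piconeDensity N f v c r) r :=
    fun r hr => hasDerivAt_piconeFlux (one_le_two.trans hN) (mem_Ioi.1 hr).ne'
      (hf.contDiffAt (Ioi_mem_nhds hr)) (hf_pos r hr).ne' (hv.contDiffAt (Ioi_mem_nhds hr))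
      (hf_eq r hr) (hv_eq r hr)
  have hflux : ∀ r ∈ Ioi 0, piconeFlux N f v r = 0 :=
    eq_zero_of_sq_le_mul_deriv hderiv
      (fun r hr => piconeDensity_nonneg (mem_Ioi.1 hr).le (hc r hr).le)
      (fun r hr => sq_piconeFlux_le (hc r hr).le)
      ((hv.continuousOn.pow 2).mul (continuousOn_pow _)) hv_int
      (sq_mul_pow_isBigO_id (by omega) hv_zero)
  intro r hr
  have hdensity : piconeDensity N f v c r = 0 :=
    (hderiv r hr).unique ((hasDerivAt_const r 0).congr_of_eventuallyEq
      (eventually_of_mem (Ioi_mem_nhds hr) hflux))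
  exact eq_zero_of_piconeDensity_eq_zero hr (hc r hr) hdensity

end Picone

/-! ### Radial functions -/

lemma hasFDerivAt_norm_of_ne_zero {E : Type*} [NormedAddCommGroup E] [InnerProductSpace ℝ E]
    {x : E} (hx : x ≠ 0) : HasFDerivAt (fun y : E => ‖y‖) (‖x‖⁻¹ • innerSL ℝ x) x := by
  have hnorm : ‖x‖ ≠ 0 := norm_ne_zero_iff.2 hx
  have hsqrt := (hasStrictFDerivAt_norm_sq x).hasFDerivAt.sqrt (pow_ne_zero 2 hnorm)
  simp only [sqrt_sq (norm_nonneg _)] at hsqrt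
  refine hsqrt.congr_fderiv ?_
  rw [← Nat.cast_smul_eq_nsmul ℝ, smul_smul]
  congr 1
  push_cast
  field_simp

lemma contDiffAt_of_contDiffAt_comp_norm {E : Type*} [NormedAddCommGroup E] [NormedSpace ℝ E]
    {n : WithTop ℕ∞} {F : ℝ → ℝ} {x : E} (hx : x ≠ 0)
    (hF : ContDiffAt ℝ n (fun y : E => F ‖y‖) x) : ContDiffAt ℝ n F ‖x‖ := by
  have hnorm : 0 < ‖x‖ := norm_pos_iff.2 hx
  have hray : ContDiffAt ℝ n (fun s : ℝ => F ‖(s / ‖x‖) • x‖) ‖x‖ := by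
    refine ContDiffAt.comp (g := fun y : E => F ‖y‖) ‖x‖ ?_ (by fun_prop)
    rwa [div_self hnorm.ne', one_smul]
  refine hray.congr_of_eventuallyEq ?_
  filter_upwards [Ioi_mem_nhds hnorm] with s hs
  have hratio : 0 ≤ s / ‖x‖ := div_nonneg (mem_Ioi.1 hs).le hnorm.le
  rw [norm_smul, norm_of_nonneg hratio, div_mul_cancel₀ _ hnorm.ne']

section Radial

variable {N : ℕ} {F : ℝ → ℝ} {x : EuclideanSpace ℝ (Fin N)}

lemma pd_comp_norm (hx : x ≠ 0) (hF : DifferentiableAt ℝ F ‖x‖) (i : Fin N) :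
    pd i (fun y => F ‖y‖) x = deriv F ‖x‖ * ‖x‖⁻¹ * x i := by
  have h : HasFDerivAt (fun y : EuclideanSpace ℝ (Fin N) => F ‖y‖) _ x :=
    hF.hasDerivAt.comp_hasFDerivAt x (hasFDerivAt_norm_of_ne_zero hx)
  rw [pd, h.fderiv]
  simp [EuclideanSpace.inner_single_right, mul_assoc]

lemma pd_pd_comp_norm (hx : x ≠ 0) (hF : ContDiffAt ℝ 2 F ‖x‖) (i : Fin N) :
    pd i (pd i fun y => F ‖y‖) x =
      (deriv (deriv F) ‖x‖ / ‖x‖ ^ 2 - deriv F ‖x‖ / ‖x‖ ^ 3) * x i ^ 2 + deriv F ‖x‖ / ‖x‖ := by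
  have hnorm : ‖x‖ ≠ 0 := norm_ne_zero_iff.2 hx
  have hpd : pd i (fun y : EuclideanSpace ℝ (Fin N) => F ‖y‖) =ᶠ[𝓝 x]
      fun y => deriv F ‖y‖ * ‖y‖⁻¹ * y i := by
    filter_upwards [isOpen_ne.mem_nhds hx,
      continuous_norm.continuousAt.eventually (hF.eventually (by simp))] with y hy hFy
    exact pd_comp_norm hy (hFy.differentiableAt two_ne_zero) i
  have hcoeff : HasFDerivAt
      (fun y : EuclideanSpace ℝ (Fin N) => deriv F ‖y‖ * ‖y‖⁻¹) _ x :=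
    ((differentiableAt_deriv_of_contDiffAt_two hF).hasDerivAt.mul
      (hasDerivAt_inv hnorm)).comp_hasFDerivAt x (hasFDerivAt_norm_of_ne_zero hx)
  have hprod : HasFDerivAt
      (fun y : EuclideanSpace ℝ (Fin N) => deriv F ‖y‖ * ‖y‖⁻¹ * y i) _ x :=
    hcoeff.mul (EuclideanSpace.proj i : EuclideanSpace ℝ (Fin N) →L[ℝ] ℝ).hasFDerivAt
  rw [pd, hpd.fderiv_eq, hprod.fderiv]
  simp only [add_apply, smul_apply, PiLp.proj_apply, PiLp.single_eq_same, smul_eq_mul, mul_one,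
    coe_innerSL_apply, EuclideanSpace.inner_single_right, ringHom_apply, one_mul]
  field_simp
  ring

lemma lap_comp_norm (hx : x ≠ 0) (hF : ContDiffAt ℝ 2 F ‖x‖) :
    lap (fun y => F ‖y‖) x = lapRad N F ‖x‖ := by
  have hnorm : ‖x‖ ≠ 0 := norm_ne_zero_iff.2 hx
  simp only [lap, pd_pd_comp_norm hx hF, Finset.sum_add_distrib, ← Finset.mul_sum,
    ← EuclideanSpace.real_norm_sq_eq, Finset.sum_const, Finset.card_univ, Fintype.card_fin,
    nsmul_eq_mul, lapRad]
  field_simp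
  ring

end Radial

/-! ### The linearization at a radial solution -/

section Linearization

variable {N : ℕ} {ω p : ℝ} {U : ℝ → ℝ}

/-- The zeroth-order coefficient `V = ω - Δ_r(U²) - U^(p-1)` of the radial operators `L₋,ₖ`, with
the angular term `λ_k / r²` left out. -/
def radialPotential (N : ℕ) (ω p : ℝ) (U : ℝ → ℝ) (r : ℝ) : ℝ :=
  ω - (lapRad N (fun s => U s ^ 2) r + U r ^ (p - 1))

lemma lapRad_eq_of_LminusRad_eq_zero {k : ℕ} {v : ℝ → ℝ} {r : ℝ}
    (h : LminusRad N ω p U k v r = 0) :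
    lapRad N v r =
      (radialPotential N ω p U r + (k : ℝ) * ((N : ℝ) + (k : ℝ) - 2) / r ^ 2) * v r := by
  unfold LminusRad at h
  unfold radialPotential
  rw [lapRad]
  linear_combination -h

lemma lapRad_profile_eq {u : EuclideanSpace ℝ (Fin N) → ℝ} (hU : ∀ y, u y = U ‖y‖)
    {x : EuclideanSpace ℝ (Fin N)} (hx : x ≠ 0) (hUx : U ‖x‖ ≠ 0) (hu : ContDiffAt ℝ 2 u x)
    (hsolves : -lap u x - u x * lap (fun y => u y ^ 2) x + ω * u x - u x ^ p = 0) :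
    lapRad N U ‖x‖ = radialPotential N ω p U ‖x‖ * U ‖x‖ := by
  obtain rfl : u = fun y => U ‖y‖ := funext hU
  have hU2 : ContDiffAt ℝ 2 U ‖x‖ := contDiffAt_of_contDiffAt_comp_norm hx hu
  rw [lap_comp_norm hx hU2, lap_comp_norm (F := fun s => U s ^ 2) hx (hU2.pow 2)] at hsolves
  have hpow : U ‖x‖ ^ p = U ‖x‖ ^ (p - 1) * U ‖x‖ := by
    rw [rpow_sub_one hUx, div_mul_cancel₀ _ hUx]
  unfold radialPotential
  linear_combination -hsolves - hpow

lemma angular_eigenvalue_pos (hN : 2 ≤ N) {k : ℕ} (hk : 1 ≤ k) :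
    0 < (k : ℝ) * ((N : ℝ) + (k : ℝ) - 2) := by
  have hN' : (2 : ℝ) ≤ N := mod_cast hN
  have hk' : (1 : ℝ) ≤ k := mod_cast hk
  exact mul_pos (by linarith) (by linarith)

end Linearization

lemma integrableOn_sq_mul_pow_of_add_sq {v w : ℝ → ℝ} {n : ℕ} (hv : ContinuousOn v (Ioi 0))
    (h : IntegrableOn (fun r => (v r ^ 2 + w r ^ 2) * r ^ n) (Ioi 0)) :
    IntegrableOn (fun r => v r ^ 2 * r ^ n) (Ioi 0) := by
  refine Integrable.mono' h
    (((hv.pow 2).mul (continuousOn_pow n)).aestronglyMeasurable measurableSet_Ioi) ?_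
  filter_upwards [ae_restrict_mem measurableSet_Ioi] with r hr
  have hrn : 0 ≤ r ^ n := pow_nonneg (mem_Ioi.1 hr).le n
  rw [norm_of_nonneg (mul_nonneg (sq_nonneg _) hrn)]
  exact mul_le_mul_of_nonneg_right (le_add_of_nonneg_right (sq_nonneg _)) hrn

theorem stmt11_general {N : ℕ} (hN : 2 ≤ N) {ω p : ℝ} {u : EuclideanSpace ℝ (Fin N) → ℝ}
    {U : ℝ → ℝ} (hu : ∀ x ≠ 0, ContDiffAt ℝ 2 u x)
    (hsolves : ∀ x ≠ 0, -lap u x - u x * lap (fun y => u y ^ 2) x + ω * u x - u x ^ p = 0)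
    (hU_pos : ∀ r, 0 < r → 0 < U r) (hU : ∀ x, u x = U ‖x‖) {k : ℕ} (hk : 1 ≤ k) {v : ℝ → ℝ}
    (hvc : ContinuousOn v (Ici 0)) (hv2 : ContDiffOn ℝ 2 v (Ioi 0))
    (hint : IntegrableOn (fun r => v r ^ 2 * r ^ (N - 1)) (Ioi 0))
    (heq : ∀ r ∈ Ioi (0 : ℝ), LminusRad N ω p U k v r = 0) :
    ∀ r, 0 ≤ r → v r = 0 := by
  have hsphere : ∀ r ∈ Ioi (0 : ℝ), ∃ x : EuclideanSpace ℝ (Fin N), x ≠ 0 ∧ ‖x‖ = r := by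
    have : NeZero N := ⟨by omega⟩
    intro r hr
    obtain ⟨x, rfl⟩ := exists_norm_eq (EuclideanSpace ℝ (Fin N)) (mem_Ioi.1 hr).le
    exact ⟨x, norm_pos_iff.1 hr, rfl⟩
  have hU2 : ContDiffOn ℝ 2 U (Ioi 0) := by
    intro r hr
    obtain ⟨x, hx, rfl⟩ := hsphere r hr
    exact (contDiffAt_of_contDiffAt_comp_norm hx (funext hU ▸ hu x hx)).contDiffWithinAt
  have hU_eq : ∀ r ∈ Ioi 0, lapRad N U r = radialPotential N ω p U r * U r := by
    intro r hr
    obtain ⟨x, hx, rfl⟩ := hsphere r hr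
    exact lapRad_profile_eq hU hx (hU_pos _ hr).ne' (hu x hx) (hsolves x hx)
  have hv_zero : v =O[𝓝[>] 0] fun _ => (1 : ℝ) :=
    ((hvc 0 self_mem_Ici).mono Ioi_subset_Ici_self).tendsto.isBigO_one ℝ
  have hv : EqOn v 0 (Ioi 0) :=
    eq_zero_of_lapRad_eq hN hU2 hU_pos hU_eq
      (fun r hr => div_pos (angular_eigenvalue_pos hN hk) (pow_pos hr 2))
      hv2 (fun r hr => lapRad_eq_of_LminusRad_eq_zero (heq r hr)) hv_zero hint
  exact hv.of_subset_closure hvc continuousOn_const Ioi_subset_Ici_self (closure_Ioi 0).ge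

/-- For `k ≥ 1`, a finite-energy solution of the radial linearized equation `L₋,ₖ v = 0` vanishes identically. -/
theorem stmt11 (N : ℕ) (hN : 2 ≤ N) (ω p : ℝ) (hω : 0 < ω) (hp : 1 < p)
    (hpmax : 3 ≤ N → p < (3 * (N : ℝ) + 2) / ((N : ℝ) - 2))
    (u : EuclideanSpace ℝ (Fin N) → ℝ) (U : ℝ → ℝ)
    (hu : IsGroundState N ω p u)
    (hU : StrictAntiOn U (Set.Ici 0) ∧ (∀ r, 0 ≤ r → 0 < U r) ∧ ∀ x, u x = U ‖x‖)
    (k : ℕ) (hk : 1 ≤ k)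
    (v : ℝ → ℝ) (hvc : ContinuousOn v (Set.Ici 0)) (hv2 : ContDiffOn ℝ 2 v (Set.Ioi 0))
    (hint : IntegrableOn (fun r => ((v r) ^ 2 + (deriv v r) ^ 2) * r ^ (N - 1)) (Set.Ioi 0))
    (heq : ∀ r ∈ Set.Ioi (0 : ℝ), LminusRad N ω p U k v r = 0) :
    ∀ r, 0 ≤ r → v r = 0 := by
  exact stmt11_general hN (fun _ _ => (contDiff_infty.1 hu.smooth 2).contDiffAt)
    (fun x _ => hu.solves x) (fun r hr => hU.2.1 r hr.le) hU.2.2 hk hvc hv2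
    (integrableOn_sq_mul_pow_of_add_sq hv2.continuousOn hint) heq

end
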